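/- Let λ > 0, θ > 0, −1 < α < 1, −1 < β < 1, and let μ be a positive Borel measure on [0,1) such that the measure ν defined by dν(t) = (1−t)^{λ−1} dμ(t) is a finite measure on [0,1). Then the Hilbert-type operator H_λ^μ, which sends an entire function f(z) = Σ_{k≥0} a_k z^k to Σ_{n≥0} [ (1/√(n!)) Σ_{k≥0} μ_λ[k+n] a_k √(k!) ] z^n where μ_λ[m] = ∫_{[0,1)} t^m (1−t)^{λ−1} dμ(t), is bounded from F²_{θ,α} to F²_{θ,β} — that is, there exists C > 0 such that for every sequence a : ℕ → ℂ with Σ_{k≥0} (k+θ)^α |a_k|² k! < ∞ one has Σ_{n≥0} (n+θ)^β | Σ_{k≥0} μ_λ[k+n] a_k √(k!) |² ≤ C · Σ_{k≥0} (k+θ)^α |a_k|² k! — if and only if ν is a [1 + (β−α)/2]-Carleson measure on [0,1). -/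

import Mathlib

open MeasureTheory

/-!
Write `m k = ∫ t ^ k dν` for the moments of `ν`, and `c k = √(k!) * a k`; the claim is that the
Hankel matrix `m (k + n)` is bounded from `ℓ²` with weight `(k + θ) ^ α` to `ℓ²` with weight
`(n + θ) ^ β` if and only if `ν` is `s`-Carleson, where `s = 1 + (β - α) / 2 ∈ (0, 2)`.

If `ν` is `s`-Carleson, then `m k = O((k + 1) ^ (-s))` (`moment_le_of_carleson`). The kernel
`(n + 1) ^ (β / 2) * (k + n + 1) ^ (-s) * (k + 1) ^ (-α / 2)` is homogeneous of degree `-1`, and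
the Schur test with the weight `(k + 1) ^ (-1 / 2)` bounds it on `ℓ²` exactly because `α` and `β`
lie in `(-1, 1)` (`sum_kernel_le`, `finite_hilbert_inequality`, `hilbert_inequality`).

For the converse, the operator is tested on `c = 1_{[M, 2M)} - 1_{[2M, 3M)}`, whose generating
polynomial `t ^ M * (1 - t ^ M) * (1 + ⋯ + t ^ (M - 1))` is at least of order `M` on the block
`[1 - 1 / M, 1 - 1 / (2 * M))`. The input has squared norm of order `M ^ (1 + α)` and the output at
least `M ^ (3 + β) * ν(block) ^ 2`, so `ν(block) = O(M ^ (-s))` (`block_measure_le`); summing over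
`M, 2 * M, 4 * M, …` gives the Carleson condition (`carleson_of_block`). The factor `1 - t ^ M`
matters: the boundedness hypothesis is an inequality between values of `∑'`, which is `0` for a
divergent series, and the zero at `t = 1` makes the output series converge for every finite `ν`.
-/

/-! ### The weighted Hilbert inequality -/

theorem rpow_le_of_comparable {γ K x y : ℝ} (hK : 1 ≤ K) (hy : 0 < y)
    (h1 : y ≤ K * x) (h2 : x ≤ K * y) : x ^ γ ≤ K ^ |γ| * y ^ γ := by
  have hK0 : 0 < K := by linarith
  have hx : 0 < x := by
    by_contra hx
    have : K * x ≤ 0 := mul_nonpos_of_nonneg_of_nonpos hK0.le (not_lt.1 hx)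
    linarith
  rcases le_or_gt 0 γ with hγ | hγ
  · rw [abs_of_nonneg hγ, ← Real.mul_rpow hK0.le hy.le]
    exact Real.rpow_le_rpow hx.le h2 hγ
  · have h3 : y / K ≤ x := by rw [div_le_iff₀ hK0]; linarith
    have := Real.rpow_le_rpow_of_nonpos (by positivity) h3 hγ.le
    rw [Real.div_rpow hy.le hK0.le] at this
    rw [abs_of_neg hγ, Real.rpow_neg hK0.le]
    calc _ ≤ _ := this
      _ = _ := by ring

theorem sum_rpow_neg_le {A : ℝ} (hA0 : 0 < A) (hA1 : A < 1) (N : ℕ) :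
    ∑ k ∈ Finset.range N, ((k : ℝ) + 1) ^ (-A) ≤ (1 - A)⁻¹ * (N : ℝ) ^ (1 - A) := by
  induction N with
  | zero => simp [Real.zero_rpow (by linarith : (1 - A) ≠ 0)]
  | succ N ih =>
    rw [Finset.sum_range_succ]
    have hx : (0 : ℝ) < (N : ℝ) + 1 := by positivity
    -- Bernoulli for the concave power `1 - A`, at the point `1 - 1 / (N + 1)`
    have hb := rpow_one_add_le_one_add_mul_self (s := -((N : ℝ) + 1)⁻¹)
      (by rw [neg_le_neg_iff]; exact inv_le_one_of_one_le₀ (by linarith [N.cast_nonneg (α := ℝ)]))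
      (p := 1 - A) (by linarith) (by linarith)
    have e1 : (N : ℝ) = ((N : ℝ) + 1) * (1 + -((N : ℝ) + 1)⁻¹) := by field_simp; ring
    have e2 : (N : ℝ) ^ (1 - A) ≤ ((N : ℝ) + 1) ^ (1 - A) - (1 - A) * ((N : ℝ) + 1) ^ (-A) := by
      have h0 : 0 ≤ 1 + -((N : ℝ) + 1)⁻¹ := by
        have := inv_le_one_of_one_le₀ (by linarith [N.cast_nonneg (α := ℝ)] : (1 : ℝ) ≤ N + 1)
        linarith
      have h3 : ((N : ℝ) + 1) ^ (-A) = ((N : ℝ) + 1) ^ (1 - A) * ((N : ℝ) + 1)⁻¹ := by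
        rw [← Real.rpow_neg_one, ← Real.rpow_add hx]; congr 1; ring
      calc (N : ℝ) ^ (1 - A) = (((N : ℝ) + 1) * (1 + -((N : ℝ) + 1)⁻¹)) ^ (1 - A) := by rw [← e1]
        _ = ((N : ℝ) + 1) ^ (1 - A) * (1 + -((N : ℝ) + 1)⁻¹) ^ (1 - A) := Real.mul_rpow hx.le h0
        _ ≤ ((N : ℝ) + 1) ^ (1 - A) * (1 + (1 - A) * -((N : ℝ) + 1)⁻¹) := by gcongr
        _ = _ := by rw [h3]; ring
    have hpos : 0 < 1 - A := by linarith
    have e3 : ((N : ℝ) + 1) ^ (-A)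
        ≤ (1 - A)⁻¹ * (((N : ℝ) + 1) ^ (1 - A) - (N : ℝ) ^ (1 - A)) := by
      rw [inv_mul_eq_div, le_div_iff₀ hpos]; linarith
    push_cast
    linarith

theorem sum_tail_rpow_neg_le {p : ℝ} (hp : 0 < p) (N L : ℕ) (hN : 0 < N) :
    ∑ k ∈ Finset.range L, ((N : ℝ) + k + 1) ^ (-(1 + p))
      ≤ p⁻¹ * ((N : ℝ) ^ (-p) - ((N : ℝ) + L) ^ (-p)) := by
  induction L with
  | zero => simp
  | succ L ih =>
    rw [Finset.sum_range_succ]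
    have hN' : (0 : ℝ) < N := by exact_mod_cast hN
    set j : ℝ := (N : ℝ) + L with hj
    have hj0 : 0 < j := by positivity
    have hlog := Real.one_sub_inv_le_log_of_pos (x := (j + 1) / j) (by positivity)
    have e0 : 1 - ((j + 1) / j)⁻¹ = (j + 1)⁻¹ := by field_simp; ring
    rw [e0] at hlog
    have e1 : 1 + p * (j + 1)⁻¹ ≤ ((j + 1) / j) ^ p := by
      rw [Real.rpow_def_of_pos (by positivity)]
      have := Real.add_one_le_exp (Real.log ((j + 1) / j) * p)
      nlinarith
    have e2 : ((j + 1) / j) ^ p = j ^ (-p) * (j + 1) ^ p := by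
      rw [Real.div_rpow (by positivity) hj0.le, Real.rpow_neg hj0.le]; ring
    have e3 : (j + 1) ^ (-(1 + p)) = (j + 1) ^ (-p) * (j + 1)⁻¹ := by
      rw [← Real.rpow_neg_one, ← Real.rpow_add (by positivity)]; congr 1; ring
    have e4 : (j + 1) ^ p * (j + 1) ^ (-p) = 1 := by
      rw [← Real.rpow_add (by positivity)]; simp
    have hq : 0 < (j + 1) ^ (-p) := by positivity
    have e5 : p * (j + 1) ^ (-(1 + p)) ≤ j ^ (-p) - (j + 1) ^ (-p) := by
      rw [e2] at e1
      have := mul_le_mul_of_nonneg_right e1 hq.le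
      rw [mul_assoc, e4] at this
      rw [e3]; linarith
    have e6 : (j + 1) ^ (-(1 + p)) ≤ p⁻¹ * (j ^ (-p) - (j + 1) ^ (-p)) := by
      rw [inv_mul_eq_div, le_div_iff₀ hp]; linarith
    push_cast
    rw [← add_assoc, ← hj]
    linarith

/-- The Schur-test row sum of the kernel `(k + n + 1) ^ (-s)` against the weight `(k + 1) ^ (-A)`.
The sum is split at `k = n + 1`. -/
theorem sum_kernel_le {s A : ℝ} (hs : 0 < s) (hA0 : 0 < A) (hA1 : A < 1) (hsA : 1 < s + A) :
    ∃ C : ℝ, 0 < C ∧ ∀ n L : ℕ,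
      ∑ k ∈ Finset.range L, ((k : ℝ) + n + 1) ^ (-s) * ((k : ℝ) + 1) ^ (-A)
        ≤ C * ((n : ℝ) + 1) ^ (1 - s - A) := by
  have hp : 0 < s + A - 1 := by linarith
  have hA : 0 < 1 - A := by linarith
  refine ⟨(1 - A)⁻¹ + (s + A - 1)⁻¹, by positivity, fun n L => ?_⟩
  have hsub : ∑ k ∈ Finset.range L, ((k : ℝ) + n + 1) ^ (-s) * ((k : ℝ) + 1) ^ (-A)
      ≤ ∑ k ∈ Finset.range ((n + 1) + L), ((k : ℝ) + n + 1) ^ (-s) * ((k : ℝ) + 1) ^ (-A) :=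
    Finset.sum_le_sum_of_subset_of_nonneg (Finset.range_mono (by omega))
      (fun _ _ _ => by positivity)
  refine hsub.trans ?_
  rw [Finset.sum_range_add, add_mul]
  have hn : (0 : ℝ) < (n : ℝ) + 1 := by positivity
  refine add_le_add ?_ ?_
  · calc _ ≤ ∑ k ∈ Finset.range (n + 1), ((n : ℝ) + 1) ^ (-s) * ((k : ℝ) + 1) ^ (-A) := by
          refine Finset.sum_le_sum fun k _ => ?_
          refine mul_le_mul_of_nonneg_right ?_ (by positivity)
          exact Real.rpow_le_rpow_of_nonpos hn (by linarith [k.cast_nonneg (α := ℝ)]) (by linarith)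
      _ ≤ ((n : ℝ) + 1) ^ (-s) * ((1 - A)⁻¹ * ((n + 1 : ℕ) : ℝ) ^ (1 - A)) := by
          rw [← Finset.mul_sum]
          exact mul_le_mul_of_nonneg_left (sum_rpow_neg_le hA0 hA1 _) (by positivity)
      _ = _ := by
          push_cast
          rw [show (1 - s - A) = -s + (1 - A) by ring, Real.rpow_add hn]; ring
  · calc _ ≤ ∑ k ∈ Finset.range L, (((n + 1 : ℕ) : ℝ) + k + 1) ^ (-(1 + (s + A - 1))) := by
          refine Finset.sum_le_sum fun k _ => ?_
          have h0 : (0 : ℝ) < ((n + 1 : ℕ) : ℝ) + k + 1 := by positivity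
          rw [show -(1 + (s + A - 1)) = -s + -A by ring, Real.rpow_add h0]
          push_cast at h0 ⊢
          refine mul_le_mul_of_nonneg_right ?_ (by positivity)
          exact Real.rpow_le_rpow_of_nonpos h0 (by linarith) (by linarith)
      _ ≤ _ := sum_tail_rpow_neg_le hp (n + 1) L (by omega)
      _ ≤ _ := by
          refine mul_le_mul_of_nonneg_left ?_ (by positivity)
          have : 0 ≤ (((n + 1 : ℕ) : ℝ) + L) ^ (-(s + A - 1)) := by positivity
          rw [show (1 - s - A) = -(s + A - 1) by ring]
          push_cast at this ⊢
          linarith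

/-- The weighted Hilbert inequality for finite sections, by the Schur test with weight
`(k + 1) ^ (-(1 + α) / 2)` on the input side. -/
theorem finite_hilbert_inequality {α β : ℝ} (hα₁ : -1 < α) (hα₂ : α < 1) (hβ₁ : -1 < β)
    (hβ₂ : β < 1) : ∃ C : ℝ, 0 < C ∧ ∀ (x : ℕ → ℝ) (N L : ℕ), (∀ k, 0 ≤ x k) →
      ∑ n ∈ Finset.range N, ((n : ℝ) + 1) ^ β *
        (∑ k ∈ Finset.range L, ((k : ℝ) + n + 1) ^ (-(1 + (β - α) / 2)) * x k) ^ 2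
        ≤ C * ∑ k ∈ Finset.range L, ((k : ℝ) + 1) ^ α * x k ^ 2 := by
  set s : ℝ := 1 + (β - α) / 2 with hs
  set A : ℝ := (1 + α) / 2 with hA
  set B : ℝ := (1 - β) / 2 with hB
  obtain ⟨C₁, hC₁, h₁⟩ := sum_kernel_le (s := s) (A := A) (by linarith) (by linarith)
    (by linarith) (by linarith)
  obtain ⟨C₂, hC₂, h₂⟩ := sum_kernel_le (s := s) (A := B) (by linarith) (by linarith)
    (by linarith) (by linarith)
  refine ⟨C₁ * C₂, by positivity, fun x N L hx => ?_⟩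
  have step : ∀ n : ℕ, ((n : ℝ) + 1) ^ β *
      (∑ k ∈ Finset.range L, ((k : ℝ) + n + 1) ^ (-s) * x k) ^ 2
      ≤ C₁ * ∑ k ∈ Finset.range L, (((n : ℝ) + k + 1) ^ (-s) * ((n : ℝ) + 1) ^ (-B)) *
          (((k : ℝ) + 1) ^ A * x k ^ 2) := by
    intro n
    have hn : (0 : ℝ) < (n : ℝ) + 1 := by positivity
    have cs := Finset.sum_sq_le_sum_mul_sum_of_sq_le_mul (Finset.range L)
      (r := fun k : ℕ => ((k : ℝ) + n + 1) ^ (-s) * x k)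
      (f := fun k : ℕ => ((k : ℝ) + n + 1) ^ (-s) * ((k : ℝ) + 1) ^ (-A))
      (g := fun k : ℕ => ((k : ℝ) + n + 1) ^ (-s) * (((k : ℝ) + 1) ^ A * x k ^ 2))
      (fun k _ => by positivity) (fun k _ => by positivity)
      (fun k _ => by
        have : ((k : ℝ) + 1) ^ (-A) * ((k : ℝ) + 1) ^ A = 1 := by
          rw [← Real.rpow_add (by positivity)]; simp
        apply le_of_eq
        linear_combination -(((k : ℝ) + n + 1) ^ (-s)) ^ 2 * x k ^ 2 * this)
    have hg : 0 ≤ ∑ k ∈ Finset.range L,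
        ((k : ℝ) + n + 1) ^ (-s) * (((k : ℝ) + 1) ^ A * x k ^ 2) :=
      Finset.sum_nonneg fun k _ => by positivity
    have e : ((n : ℝ) + 1) ^ β * ((n : ℝ) + 1) ^ (1 - s - A) = ((n : ℝ) + 1) ^ (-B) := by
      rw [← Real.rpow_add hn]; congr 1; rw [hs, hA, hB]; ring
    calc _ ≤ ((n : ℝ) + 1) ^ β * (C₁ * ((n : ℝ) + 1) ^ (1 - s - A) * ∑ k ∈ Finset.range L,
            ((k : ℝ) + n + 1) ^ (-s) * (((k : ℝ) + 1) ^ A * x k ^ 2)) := by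
          refine mul_le_mul_of_nonneg_left (cs.trans ?_) (by positivity)
          exact mul_le_mul_of_nonneg_right (h₁ n L) hg
      _ = C₁ * (((n : ℝ) + 1) ^ (-B) * ∑ k ∈ Finset.range L,
            ((k : ℝ) + n + 1) ^ (-s) * (((k : ℝ) + 1) ^ A * x k ^ 2)) := by rw [← e]; ring
      _ = _ := by
          rw [Finset.mul_sum]
          congr 1
          refine Finset.sum_congr rfl fun k _ => ?_
          rw [add_comm (k : ℝ) n]; ring
  calc _ ≤ ∑ n ∈ Finset.range N, C₁ * ∑ k ∈ Finset.range L,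
          (((n : ℝ) + k + 1) ^ (-s) * ((n : ℝ) + 1) ^ (-B)) * (((k : ℝ) + 1) ^ A * x k ^ 2) :=
        Finset.sum_le_sum fun n _ => step n
    _ = C₁ * ∑ k ∈ Finset.range L, (∑ n ∈ Finset.range N,
          ((n : ℝ) + k + 1) ^ (-s) * ((n : ℝ) + 1) ^ (-B)) * (((k : ℝ) + 1) ^ A * x k ^ 2) := by
        rw [← Finset.mul_sum, Finset.sum_comm]
        simp_rw [Finset.sum_mul]
    _ ≤ C₁ * ∑ k ∈ Finset.range L, C₂ * (((k : ℝ) + 1) ^ α * x k ^ 2) := by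
        refine mul_le_mul_of_nonneg_left (Finset.sum_le_sum fun k _ => ?_) hC₁.le
        have e : ((k : ℝ) + 1) ^ (1 - s - B) * ((k : ℝ) + 1) ^ A = ((k : ℝ) + 1) ^ α := by
          rw [← Real.rpow_add (by positivity)]; congr 1; rw [hs, hA, hB]; ring
        calc _ ≤ (C₂ * ((k : ℝ) + 1) ^ (1 - s - B)) * (((k : ℝ) + 1) ^ A * x k ^ 2) :=
              mul_le_mul_of_nonneg_right (h₂ k N) (by positivity)
          _ = _ := by rw [← e]; ring
    _ = _ := by rw [← Finset.mul_sum, mul_assoc]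

/-- Passage from finite sections to the full operator, and from the weights `n + 1` to `n + θ`.
Here `x k` stands for `√(k!) * |a k|`. The inner series converge because their partial sums
are bounded. -/
theorem hilbert_inequality {θ α β : ℝ} (hθ : 0 < θ) (hα₁ : -1 < α) (hα₂ : α < 1) (hβ₁ : -1 < β)
    (hβ₂ : β < 1) (m : ℕ → ℝ) (hm0 : ∀ k, 0 ≤ m k) (D : ℝ)
    (hm : ∀ k, m k ≤ D * ((k : ℝ) + 1) ^ (-(1 + (β - α) / 2))) :
    ∃ C : ℝ, 0 < C ∧ ∀ x : ℕ → ℝ, (∀ k, 0 ≤ x k) →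
      Summable (fun k : ℕ => ((k : ℝ) + θ) ^ α * x k ^ 2) →
      (∀ n, Summable fun k => m (k + n) * x k) ∧
      ∀ N, ∑ n ∈ Finset.range N, ((n : ℝ) + θ) ^ β * (∑' k, m (k + n) * x k) ^ 2
        ≤ C * ∑' k : ℕ, ((k : ℝ) + θ) ^ α * x k ^ 2 := by
  obtain ⟨C, hC, h⟩ := finite_hilbert_inequality hα₁ hα₂ hβ₁ hβ₂
  set K : ℝ := 1 + θ + θ⁻¹ with hK
  have hK1 : 1 ≤ K := by have : 0 < θ⁻¹ := by positivity
                         linarith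
  have cmp1 : ∀ n : ℕ, (n : ℝ) + 1 ≤ K * ((n : ℝ) + θ) := fun n => by
    have e : K * ((n : ℝ) + θ) = (1 + θ + θ⁻¹) * n + (θ + θ * θ + 1) := by
      rw [hK]; field_simp
    rw [e]
    have : (0 : ℝ) ≤ (θ + θ⁻¹) * n := by positivity
    nlinarith
  have cmp2 : ∀ n : ℕ, (n : ℝ) + θ ≤ K * ((n : ℝ) + 1) := fun n => by
    have : (0 : ℝ) ≤ (θ + θ⁻¹) * n := by positivity
    have : (0 : ℝ) < θ⁻¹ := by positivity
    nlinarith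
  have cα : ∀ n : ℕ, ((n : ℝ) + 1) ^ α ≤ K ^ |α| * ((n : ℝ) + θ) ^ α := fun n =>
    rpow_le_of_comparable hK1 (by positivity) (cmp2 n) (cmp1 n)
  have cβ : ∀ n : ℕ, ((n : ℝ) + θ) ^ β ≤ K ^ |β| * ((n : ℝ) + 1) ^ β := fun n =>
    rpow_le_of_comparable hK1 (by positivity) (cmp1 n) (cmp2 n)
  have hD : 0 ≤ D := by simpa using (hm0 0).trans (hm 0)
  refine ⟨K ^ |β| * D ^ 2 * C * K ^ |α| + 1, by positivity, fun x hx hsum => ?_⟩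
  set S := ∑' k : ℕ, ((k : ℝ) + θ) ^ α * x k ^ 2 with hS
  have hS0 : 0 ≤ S := tsum_nonneg fun k => by positivity
  have key : ∀ N L : ℕ, ∑ n ∈ Finset.range N, ((n : ℝ) + θ) ^ β *
      (∑ k ∈ Finset.range L, m (k + n) * x k) ^ 2 ≤ (K ^ |β| * D ^ 2 * C * K ^ |α| + 1) * S := by
    intro N L
    calc _ ≤ ∑ n ∈ Finset.range N, K ^ |β| * D ^ 2 * (((n : ℝ) + 1) ^ β *
          (∑ k ∈ Finset.range L, ((k : ℝ) + n + 1) ^ (-(1 + (β - α) / 2)) * x k) ^ 2) := by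
          refine Finset.sum_le_sum fun n _ => ?_
          have h1 : ∑ k ∈ Finset.range L, m (k + n) * x k ≤
              D * ∑ k ∈ Finset.range L, ((k : ℝ) + n + 1) ^ (-(1 + (β - α) / 2)) * x k := by
            rw [Finset.mul_sum]
            refine Finset.sum_le_sum fun k _ => ?_
            have := mul_le_mul_of_nonneg_right (hm (k + n)) (hx k)
            push_cast at this
            linarith
          have h0 : 0 ≤ ∑ k ∈ Finset.range L, m (k + n) * x k :=
            Finset.sum_nonneg fun k _ => mul_nonneg (hm0 _) (hx k)
          calc _ ≤ (K ^ |β| * ((n : ℝ) + 1) ^ β) * (D * ∑ k ∈ Finset.range L,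
                ((k : ℝ) + n + 1) ^ (-(1 + (β - α) / 2)) * x k) ^ 2 :=
                mul_le_mul (cβ n) (pow_le_pow_left₀ h0 h1 2) (by positivity) (by positivity)
            _ = _ := by ring
      _ ≤ K ^ |β| * D ^ 2 * (C * ∑ k ∈ Finset.range L, ((k : ℝ) + 1) ^ α * x k ^ 2) := by
          rw [← Finset.mul_sum]
          exact mul_le_mul_of_nonneg_left (h x N L hx) (by positivity)
      _ ≤ K ^ |β| * D ^ 2 * (C * (K ^ |α| * S)) := by
          have : ∑ k ∈ Finset.range L, ((k : ℝ) + 1) ^ α * x k ^ 2 ≤ K ^ |α| * S := by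
            calc _ ≤ ∑ k ∈ Finset.range L, K ^ |α| * (((k : ℝ) + θ) ^ α * x k ^ 2) := by
                  refine Finset.sum_le_sum fun k _ => ?_
                  rw [← mul_assoc]
                  exact mul_le_mul_of_nonneg_right (cα k) (by positivity)
              _ ≤ _ := by
                  rw [← Finset.mul_sum]
                  refine mul_le_mul_of_nonneg_left ?_ (by positivity)
                  exact hsum.sum_le_tsum _ fun k _ => by positivity
          gcongr
      _ ≤ _ := by linarith
  have hsm : ∀ n, Summable fun k => m (k + n) * x k := by
    intro n
    have hw : 0 < ((n : ℝ) + θ) ^ β := by positivity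
    refine summable_of_sum_range_le
      (c := √((K ^ |β| * D ^ 2 * C * K ^ |α| + 1) * S / ((n : ℝ) + θ) ^ β))
      (fun k => mul_nonneg (hm0 _) (hx k)) fun L => ?_
    refine Real.le_sqrt_of_sq_le ?_
    rw [le_div_iff₀ hw, mul_comm]
    refine le_trans ?_ (key (n + 1) L)
    exact Finset.single_le_sum (f := fun n : ℕ => ((n : ℝ) + θ) ^ β *
      (∑ k ∈ Finset.range L, m (k + n) * x k) ^ 2) (fun i _ => by positivity) (by simp)
  refine ⟨hsm, fun N => ?_⟩
  have ht : Filter.Tendsto (fun L : ℕ => ∑ n ∈ Finset.range N, ((n : ℝ) + θ) ^ β *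
      (∑ k ∈ Finset.range L, m (k + n) * x k) ^ 2) Filter.atTop
      (nhds (∑ n ∈ Finset.range N, ((n : ℝ) + θ) ^ β * (∑' k, m (k + n) * x k) ^ 2)) :=
    tendsto_finsetSum _ fun n _ => ((hsm n).hasSum.tendsto_sum_nat.pow 2).const_mul _
  exact le_of_tendsto' ht fun L => key N L

/-! ### Moments of measures on `[0, 1)` -/

/-- A Carleson measure of order `s` has moments of size `O((m + 1) ^ (-s))`. With `M = m + 1`,
each `t` satisfies `t ^ m ≤ e * exp (-i)` for `i = ⌊M * (1 - t)⌋`, so `t ^ m` is dominated by the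
layered sum `∑ i, e * exp (-i) * 1_{t ≥ 1 - (i + 1) / M}`, which is then integrated termwise. -/
theorem moment_le_of_carleson {s : ℝ} (hs : 0 < s) (hs2 : s ≤ 2) (ν : Measure ℝ)
    [IsFiniteMeasure ν] {C₁ : ℝ} (hC₁ : 0 < C₁)
    (h : ∀ t ∈ Set.Ico (0 : ℝ) 1, ν (Set.Ico t 1) ≤ ENNReal.ofReal (C₁ * (1 - t) ^ s)) :
    ∃ D : ℝ, ∀ m : ℕ, ∫ t in Set.Ico (0 : ℝ) 1, t ^ m ∂ν ≤ D * ((m : ℝ) + 1) ^ (-s) := by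
  have hsum : Summable fun i : ℕ => Real.exp (-(i : ℝ)) * ((i : ℝ) + 1) ^ s := by
    have h1 := (summable_nat_add_iff 1).2 (Real.summable_pow_mul_exp_neg_nat_mul 2 one_pos)
    refine Summable.of_nonneg_of_le (fun i => by positivity) (fun i => ?_) (h1.mul_left (Real.exp 1))
    have h2 : ((i : ℝ) + 1) ^ s ≤ ((i : ℝ) + 1) ^ 2 := by
      rw [← Real.rpow_natCast]
      exact Real.rpow_le_rpow_of_exponent_le (by linarith [i.cast_nonneg (α := ℝ)])
        (by push_cast; exact hs2)
    have h3 : Real.exp 1 * Real.exp (-1 * ((i : ℝ) + 1)) = Real.exp (-(i : ℝ)) := by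
      rw [← Real.exp_add]; congr 1; ring
    push_cast
    calc _ ≤ Real.exp (-(i : ℝ)) * ((i : ℝ) + 1) ^ 2 := by gcongr
      _ = _ := by rw [← h3]; ring
  set T := ∑' i : ℕ, Real.exp (-(i : ℝ)) * ((i : ℝ) + 1) ^ s with hT
  have hT0 : 0 ≤ T := tsum_nonneg fun i => by positivity
  refine ⟨Real.exp 1 * C₁ * T, fun m => ?_⟩
  set M : ℝ := (m : ℝ) + 1 with hM
  have hM0 : 0 < M := by positivity
  have hpt : ∀ t ∈ Set.Ico (0 : ℝ) 1, ENNReal.ofReal (t ^ m) ≤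
      ∑' i : ℕ, ENNReal.ofReal (Real.exp 1 * Real.exp (-(i : ℝ))) *
        (Set.Ici (1 - ((i : ℝ) + 1) / M)).indicator 1 t := by
    intro t ht
    refine le_trans ?_ (ENNReal.le_tsum ⌊M * (1 - t)⌋₊)
    have h0 : 0 ≤ M * (1 - t) := mul_nonneg hM0.le (by linarith [ht.2])
    rw [Set.indicator_of_mem]
    · rw [Pi.one_apply, mul_one]
      refine ENNReal.ofReal_le_ofReal ?_
      have h1 : t ≤ Real.exp (-(1 - t)) := by linarith [Real.add_one_le_exp (-(1 - t))]
      calc t ^ m ≤ Real.exp (-(1 - t)) ^ m := pow_le_pow_left₀ ht.1 h1 m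
        _ = Real.exp (m * -(1 - t)) := by rw [← Real.exp_nat_mul]
        _ ≤ Real.exp (1 + -((⌊M * (1 - t)⌋₊ : ℕ) : ℝ)) := by
            refine Real.exp_le_exp.2 ?_
            have := Nat.floor_le h0
            have e : (m : ℝ) = M - 1 := by rw [hM]; ring
            rw [e]
            linarith [ht.1]
        _ = _ := Real.exp_add _ _
    · have h2 := Nat.lt_floor_add_one (M * (1 - t))
      rw [Set.mem_Ici, sub_le_comm, le_div_iff₀ hM0]
      linarith
  have hlay : ∀ i : ℕ, ∫⁻ t in Set.Ico (0 : ℝ) 1,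
      ENNReal.ofReal (Real.exp 1 * Real.exp (-(i : ℝ))) *
        (Set.Ici (1 - ((i : ℝ) + 1) / M)).indicator 1 t ∂ν
      ≤ ENNReal.ofReal (Real.exp 1 * C₁ * M ^ (-s) *
          (Real.exp (-(i : ℝ)) * ((i : ℝ) + 1) ^ s)) := by
    intro i
    rw [lintegral_const_mul _ (measurable_one.indicator measurableSet_Ici),
      lintegral_indicator_one measurableSet_Ici, Measure.restrict_apply measurableSet_Ici]
    have hi : 0 < ((i : ℝ) + 1) / M := by positivity
    have hsub : Set.Ici (1 - ((i : ℝ) + 1) / M) ∩ Set.Ico (0 : ℝ) 1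
        ⊆ Set.Ico (max 0 (1 - ((i : ℝ) + 1) / M)) 1 := fun t ht =>
      ⟨max_le ht.2.1 ht.1, ht.2.2⟩
    have hlt : max 0 (1 - ((i : ℝ) + 1) / M) < 1 := max_lt one_pos (by linarith)
    have hb := (measure_mono hsub).trans (h _ ⟨le_max_left _ _, hlt⟩)
    have hb2 : C₁ * (1 - max 0 (1 - ((i : ℝ) + 1) / M)) ^ s ≤ C₁ * (((i : ℝ) + 1) ^ s * M ^ (-s)) := by
      refine mul_le_mul_of_nonneg_left ?_ hC₁.le
      rw [Real.rpow_neg hM0.le, ← div_eq_mul_inv, ← Real.div_rpow (by positivity) hM0.le]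
      exact Real.rpow_le_rpow (by linarith)
        (by linarith [le_max_right 0 (1 - ((i : ℝ) + 1) / M)]) hs.le
    calc _ ≤ ENNReal.ofReal (Real.exp 1 * Real.exp (-(i : ℝ))) *
          ENNReal.ofReal (C₁ * (((i : ℝ) + 1) ^ s * M ^ (-s))) := by
          gcongr
          exact hb.trans (ENNReal.ofReal_le_ofReal hb2)
      _ = _ := by
          rw [← ENNReal.ofReal_mul (by positivity)]
          congr 1; ring
  have htot : ∫⁻ t in Set.Ico (0 : ℝ) 1, ENNReal.ofReal (t ^ m) ∂ν
      ≤ ENNReal.ofReal (Real.exp 1 * C₁ * T * M ^ (-s)) := by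
    calc _ ≤ ∫⁻ t in Set.Ico (0 : ℝ) 1, ∑' i : ℕ,
          ENNReal.ofReal (Real.exp 1 * Real.exp (-(i : ℝ))) *
            (Set.Ici (1 - ((i : ℝ) + 1) / M)).indicator 1 t ∂ν :=
          setLIntegral_mono' measurableSet_Ico hpt
      _ = ∑' i : ℕ, ∫⁻ t in Set.Ico (0 : ℝ) 1,
          ENNReal.ofReal (Real.exp 1 * Real.exp (-(i : ℝ))) *
            (Set.Ici (1 - ((i : ℝ) + 1) / M)).indicator 1 t ∂ν :=
          lintegral_tsum fun i =>
            ((measurable_one.indicator measurableSet_Ici).const_mul _).aemeasurable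
      _ ≤ ∑' i : ℕ, ENNReal.ofReal (Real.exp 1 * C₁ * M ^ (-s) *
          (Real.exp (-(i : ℝ)) * ((i : ℝ) + 1) ^ s)) := ENNReal.tsum_le_tsum hlay
      _ = _ := by
          rw [← ENNReal.ofReal_tsum_of_nonneg (fun i => by positivity) (hsum.mul_left _),
            tsum_mul_left]
          congr 1; ring
  rw [integral_eq_lintegral_of_nonneg_ae]
  · exact ENNReal.toReal_le_of_le_ofReal (by positivity) htot
  · exact (ae_restrict_mem measurableSet_Ico).mono fun t ht => pow_nonneg ht.1 m
  · exact (measurable_id.pow_const m).aestronglyMeasurable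

theorem integrableOn_pow (ν : Measure ℝ) [IsFiniteMeasure ν] (m : ℕ) :
    IntegrableOn (fun t : ℝ => t ^ m) (Set.Ico 0 1) ν := by
  refine IntegrableOn.of_bound (measure_lt_top _ _)
    (measurable_id.pow_const m).aestronglyMeasurable 1 ?_
  refine (ae_restrict_mem measurableSet_Ico).mono fun t ht => ?_
  rw [Real.norm_of_nonneg (pow_nonneg ht.1 m)]
  exact pow_le_one₀ ht.1 ht.2.le

theorem moment_sub_eq (ν : Measure ℝ) [IsFiniteMeasure ν] (k M : ℕ) :
    ∫ t in Set.Ico (0 : ℝ) 1, t ^ k ∂ν - ∫ t in Set.Ico (0 : ℝ) 1, t ^ (k + M) ∂ν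
      = ∫ t in Set.Ico (0 : ℝ) 1, t ^ k * (1 - t ^ M) ∂ν := by
  rw [← integral_sub (integrableOn_pow ν k) (integrableOn_pow ν (k + M))]
  congr 1; ext t; ring

theorem moment_sub_nonneg (ν : Measure ℝ) [IsFiniteMeasure ν] (k M : ℕ) :
    0 ≤ ∫ t in Set.Ico (0 : ℝ) 1, t ^ k * (1 - t ^ M) ∂ν :=
  setIntegral_nonneg measurableSet_Ico fun t ht =>
    mul_nonneg (pow_nonneg ht.1 k) (by linarith [pow_le_one₀ (n := M) ht.1 ht.2.le])

theorem integrableOn_moment_sub (ν : Measure ℝ) [IsFiniteMeasure ν] (k M : ℕ) :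
    IntegrableOn (fun t : ℝ => t ^ k * (1 - t ^ M)) (Set.Ico 0 1) ν := by
  have := (integrableOn_pow ν k).sub (integrableOn_pow ν (k + M))
  refine this.congr_fun (fun t _ => ?_) measurableSet_Ico
  simp only [Pi.sub_apply]; ring

theorem moment_sub_le (ν : Measure ℝ) [IsFiniteMeasure ν] (k M : ℕ) :
    ∫ t in Set.Ico (0 : ℝ) 1, t ^ k * (1 - t ^ M) ∂ν
      ≤ M * ν.real (Set.Ico (0 : ℝ) 1) * ((k : ℝ) + 1)⁻¹ := by
  have hpt : ∀ t ∈ Set.Ico (0 : ℝ) 1, t ^ k * (1 - t ^ M) ≤ M * ((k : ℝ) + 1)⁻¹ := by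
    intro t ht
    have h1 := one_add_mul_le_pow (a := t - 1) (by linarith [ht.1]) M
    have h2 : 1 - t ^ M ≤ M * (1 - t) := by
      rw [add_sub_cancel] at h1; linarith
    -- `(k + 1) * t ^ k ≤ 1 + t + ⋯ + t ^ k`, and `(1 + t + ⋯ + t ^ k) * (1 - t) ≤ 1`
    have h3 : t ^ k * (1 - t) ≤ ((k : ℝ) + 1)⁻¹ := by
      rw [← one_div, le_div_iff₀ (by positivity)]
      have hg := geom_sum_mul t (k + 1)
      have hs : ((k : ℝ) + 1) * t ^ k ≤ ∑ i ∈ Finset.range (k + 1), t ^ i := by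
        have := Finset.card_nsmul_le_sum (Finset.range (k + 1)) (fun i => t ^ i) (t ^ k)
          (fun i hi => pow_le_pow_of_le_one ht.1 ht.2.le (by
            have := Finset.mem_range.1 hi; omega))
        simpa using this
      have := mul_le_mul_of_nonneg_right hs (by linarith [ht.2] : 0 ≤ 1 - t)
      have hp : 0 ≤ t ^ (k + 1) := pow_nonneg ht.1 _
      nlinarith
    calc _ ≤ t ^ k * (M * (1 - t)) := mul_le_mul_of_nonneg_left h2 (pow_nonneg ht.1 k)
      _ = M * (t ^ k * (1 - t)) := by ring
      _ ≤ _ := by gcongr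
  calc _ ≤ ∫ t in Set.Ico (0 : ℝ) 1, (M * ((k : ℝ) + 1)⁻¹ : ℝ) ∂ν :=
        setIntegral_mono_on (integrableOn_moment_sub ν k M)
          (integrableOn_const (measure_ne_top _ _)) measurableSet_Ico hpt
    _ = _ := by rw [setIntegral_const, smul_eq_mul]; ring

theorem le_moment_sub (ν : Measure ℝ) [IsFiniteMeasure ν] (k M : ℕ) (hM : 2 ≤ M)
    (hk : k ≤ 5 * M) :
    Real.exp (-2) ^ 5 * (1 / 3) * ν.real (Set.Ico (1 - 1 / (M : ℝ)) (1 - 1 / (2 * M)))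
      ≤ ∫ t in Set.Ico (0 : ℝ) 1, t ^ k * (1 - t ^ M) ∂ν := by
  have hM' : (2 : ℝ) ≤ M := by exact_mod_cast hM
  have hM0 : (0 : ℝ) < M := by linarith
  have hinv : 1 / (M : ℝ) ≤ 1 / 2 := one_div_le_one_div_of_le (by norm_num) hM'
  have hsub : Set.Ico (1 - 1 / (M : ℝ)) (1 - 1 / (2 * M)) ⊆ Set.Ico 0 1 := fun t ht =>
    ⟨by linarith [ht.1], ht.2.trans (by have : 0 < 1 / (2 * (M : ℝ)) := by positivity
                                        linarith)⟩
  have hpt : ∀ t ∈ Set.Ico (1 - 1 / (M : ℝ)) (1 - 1 / (2 * M)),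
      Real.exp (-2) ^ 5 * (1 / 3) ≤ t ^ k * (1 - t ^ M) := by
    intro t ht
    have ht' := hsub ht
    have ht0 : 0 < t := by linarith [ht.1]
    have hq : Real.exp (-2) ≤ t ^ M := by
      have hi1 : t⁻¹ ≤ 1 + 2 / M := by
        rw [inv_le_comm₀ ht0 (by positivity)]
        refine le_trans ?_ ht.1
        rw [inv_le_iff_one_le_mul₀ (by positivity)]
        have e : (1 - 1 / (M : ℝ)) * (1 + 2 / M) = 1 + (1 / M) * (1 - 2 * (1 / M)) := by ring
        rw [e]
        have : 0 ≤ (1 / (M : ℝ)) * (1 - 2 * (1 / M)) := mul_nonneg (by positivity) (by linarith)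
        linarith
      have hi2 : t⁻¹ ≤ Real.exp (2 / M) := hi1.trans (by linarith [Real.add_one_le_exp (2 / (M : ℝ))])
      have hi3 : Real.exp (-(2 / M)) ≤ t := by
        rw [Real.exp_neg]; exact inv_le_of_inv_le₀ ht0 hi2
      calc Real.exp (-2) = Real.exp (-(2 / M)) ^ M := by
            rw [← Real.exp_nat_mul]; congr 1; field_simp
        _ ≤ t ^ M := pow_le_pow_left₀ (Real.exp_pos _).le hi3 M
    have hr : t ^ M ≤ 2 / 3 := by
      have hi1 : t ≤ Real.exp (-(1 / (2 * M))) :=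
        ht.2.le.trans (by linarith [Real.add_one_le_exp (-(1 / (2 * (M : ℝ))))])
      calc t ^ M ≤ Real.exp (-(1 / (2 * M))) ^ M := pow_le_pow_left₀ ht'.1 hi1 M
        _ = (Real.exp (1 / 2))⁻¹ := by
            rw [← Real.exp_nat_mul, ← Real.exp_neg]; congr 1; field_simp
        _ ≤ (3 / 2)⁻¹ := inv_anti₀ (by norm_num) (by linarith [Real.add_one_le_exp (1 / 2 : ℝ)])
        _ = 2 / 3 := by norm_num
    have h1 : Real.exp (-2) ^ 5 ≤ t ^ k := by
      calc _ ≤ (t ^ M) ^ 5 := pow_le_pow_left₀ (Real.exp_pos _).le hq 5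
        _ = t ^ (5 * M) := by rw [← pow_mul, mul_comm]
        _ ≤ t ^ k := pow_le_pow_of_le_one ht'.1 ht'.2.le hk
    exact mul_le_mul h1 (by linarith) (by norm_num) (pow_nonneg ht'.1 k)
  calc _ = ∫ t in Set.Ico (1 - 1 / (M : ℝ)) (1 - 1 / (2 * M)), (Real.exp (-2) ^ 5 * (1 / 3)) ∂ν := by
        rw [setIntegral_const, smul_eq_mul]; ring
    _ ≤ ∫ t in Set.Ico (1 - 1 / (M : ℝ)) (1 - 1 / (2 * M)), t ^ k * (1 - t ^ M) ∂ν :=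
        setIntegral_mono_on (integrableOn_const (measure_ne_top _ _))
          ((integrableOn_moment_sub ν k M).mono_set hsub) measurableSet_Ico hpt
    _ ≤ _ := by
        refine setIntegral_mono_set (integrableOn_moment_sub ν k M) ?_ hsub.eventuallyLE
        exact (ae_restrict_mem measurableSet_Ico).mono fun t ht =>
          mul_nonneg (pow_nonneg ht.1 k) (by linarith [pow_le_one₀ (n := M) ht.1 ht.2.le])

/-! ### Necessity of the Carleson condition -/

/-- The boundedness inequality specialised to finitely supported real sequences, where `c k` stands
for `√(k!) * a k`; all inner series are then finite sums. -/
theorem bound_of_finite_support {θ α β C : ℝ} (m : ℕ → ℝ)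
    (H : ∀ a : ℕ → ℂ,
      Summable (fun k : ℕ => ((k : ℝ) + θ) ^ α * ‖a k‖ ^ 2 * (Nat.factorial k : ℝ)) →
      ∑' n : ℕ, ((n : ℝ) + θ) ^ β *
          ‖∑' k : ℕ, ((m (k + n) * Real.sqrt (Nat.factorial k) : ℝ) : ℂ) * a k‖ ^ 2
        ≤ C * ∑' k : ℕ, ((k : ℝ) + θ) ^ α * ‖a k‖ ^ 2 * (Nat.factorial k : ℝ))
    (L : ℕ) (c : ℕ → ℝ) (hc : ∀ k, L ≤ k → c k = 0) :
    ∑' n : ℕ, ((n : ℝ) + θ) ^ β * (∑ k ∈ Finset.range L, m (k + n) * c k) ^ 2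
      ≤ C * ∑ k ∈ Finset.range L, ((k : ℝ) + θ) ^ α * c k ^ 2 := by
  have hf : ∀ k : ℕ, 0 < Real.sqrt (Nat.factorial k) := fun k =>
    Real.sqrt_pos.2 (by exact_mod_cast Nat.factorial_pos k)
  have h := H (fun k => ((c k / Real.sqrt (Nat.factorial k) : ℝ) : ℂ))
  have e1 : ∀ k : ℕ, ((k : ℝ) + θ) ^ α * ‖((c k / Real.sqrt (Nat.factorial k) : ℝ) : ℂ)‖ ^ 2 *
      (Nat.factorial k : ℝ) = ((k : ℝ) + θ) ^ α * c k ^ 2 := by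
    intro k
    rw [Complex.norm_real, Real.norm_eq_abs, sq_abs, div_pow, Real.sq_sqrt (by positivity)]
    have : (Nat.factorial k : ℝ) ≠ 0 := by exact_mod_cast Nat.factorial_ne_zero k
    field_simp
  have e2 : ∀ n k : ℕ, ((m (k + n) * Real.sqrt (Nat.factorial k) : ℝ) : ℂ) *
      ((c k / Real.sqrt (Nat.factorial k) : ℝ) : ℂ) = ((m (k + n) * c k : ℝ) : ℂ) := by
    intro n k
    rw [← Complex.ofReal_mul]
    congr 1
    have := (hf k).ne'
    field_simp
  simp only [e1, e2] at h
  have hz : ∀ k ∉ Finset.range L, ((k : ℝ) + θ) ^ α * c k ^ 2 = 0 := fun k hk => by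
    rw [hc k (by simpa using hk)]; simp
  have h' := h (summable_of_ne_finset_zero hz)
  rw [tsum_eq_sum hz] at h'
  convert h' using 4 with n
  rw [tsum_eq_sum (s := Finset.range L) (fun k hk => by rw [hc k (by simpa using hk)]; simp),
    ← Complex.ofReal_sum, Complex.norm_real, Real.norm_eq_abs, sq_abs]

/-- Boundedness gives the Carleson estimate on the dyadic-type blocks
`[1 - 1 / M, 1 - 1 / (2 * M))`. The test sequence is `1` on `[M, 2M)` and `-1` on `[2M, 3M)`. Its
generating polynomial vanishes at `t = 1`, which makes the output series summable whatever `ν` is,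
so that the inequality between values of `∑'` carries information. -/
theorem block_measure_le {θ α β C : ℝ} (hθ : 0 < θ) (hβ₂ : β < 1) (hC : 0 < C)
    (ν : Measure ℝ) [IsFiniteMeasure ν]
    (H : ∀ a : ℕ → ℂ,
      Summable (fun k : ℕ => ((k : ℝ) + θ) ^ α * ‖a k‖ ^ 2 * (Nat.factorial k : ℝ)) →
      ∑' n : ℕ, ((n : ℝ) + θ) ^ β *
          ‖∑' k : ℕ, (((∫ t in Set.Ico (0 : ℝ) 1, t ^ (k + n) ∂ν) *
            Real.sqrt (Nat.factorial k) : ℝ) : ℂ) * a k‖ ^ 2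
        ≤ C * ∑' k : ℕ, ((k : ℝ) + θ) ^ α * ‖a k‖ ^ 2 * (Nat.factorial k : ℝ)) :
    ∃ E : ℝ, 0 < E ∧ ∀ M : ℕ, 2 ≤ M →
      ν.real (Set.Ico (1 - 1 / (M : ℝ)) (1 - 1 / (2 * M)))
        ≤ E * (M : ℝ) ^ (-(1 + (β - α) / 2)) := by
  set κ : ℝ := Real.exp (-2) ^ 5 * (1 / 3) with hκ
  have hκ0 : 0 < κ := by positivity
  set K : ℝ := 3 + θ with hK
  have hK1 : 1 ≤ K := by linarith
  refine ⟨√(C * (2 * K ^ |α|) * K ^ |β| / κ ^ 2), by positivity, fun M hM => ?_⟩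
  have hM' : (2 : ℝ) ≤ M := by exact_mod_cast hM
  have hM0 : (0 : ℝ) < M := by linarith
  set V := ν.real (Set.Ico (1 - 1 / (M : ℝ)) (1 - 1 / (2 * M))) with hV
  have hV0 : 0 ≤ V := measureReal_nonneg
  set m : ℕ → ℝ := fun k => ∫ t in Set.Ico (0 : ℝ) 1, t ^ k ∂ν with hm
  set c : ℕ → ℝ := fun k =>
    if k < M then 0 else if k < M + M then 1 else if k < M + M + M then -1 else 0 with hc
  have hb := bound_of_finite_support m H (M + M + M) c (fun k hk => by
    simp only [hc]; rw [if_neg (by omega), if_neg (by omega), if_neg (by omega)])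
  have hout : ∀ n, ∑ k ∈ Finset.range (M + M + M), m (k + n) * c k
      = ∑ i ∈ Finset.range M, ∫ t in Set.Ico (0 : ℝ) 1, t ^ (M + i + n) * (1 - t ^ M) ∂ν := by
    intro n
    rw [Finset.sum_range_add, Finset.sum_range_add]
    have z1 : ∑ k ∈ Finset.range M, m (k + n) * c k = 0 := Finset.sum_eq_zero fun k hk => by
      have := Finset.mem_range.1 hk
      simp only [hc]; rw [if_pos this, mul_zero]
    rw [z1, zero_add, ← Finset.sum_add_distrib]
    refine Finset.sum_congr rfl fun i hi => ?_
    have hi := Finset.mem_range.1 hi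
    have c1 : c (M + i) = 1 := by
      simp only [hc]; rw [if_neg (by omega), if_pos (by omega)]
    have c2 : c (M + M + i) = -1 := by
      simp only [hc]; rw [if_neg (by omega), if_neg (by omega), if_pos (by omega)]
    rw [c1, c2, ← moment_sub_eq, show M + M + i + n = M + i + n + M by ring]
    ring
  simp only [hout] at hb
  set b : ℕ → ℝ := fun n =>
    ∑ i ∈ Finset.range M, ∫ t in Set.Ico (0 : ℝ) 1, t ^ (M + i + n) * (1 - t ^ M) ∂ν with hbdef
  have hb0 : ∀ n, 0 ≤ b n := fun n => Finset.sum_nonneg fun i _ => moment_sub_nonneg ν _ _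
  -- decay `b n = O(1 / n)`, hence summability because `β - 2 < -1`
  have hbup : ∀ n, b n ≤ M * (M * ν.real (Set.Ico (0 : ℝ) 1)) * ((n : ℝ) + 1)⁻¹ := by
    intro n
    calc b n ≤ ∑ i ∈ Finset.range M, M * ν.real (Set.Ico (0 : ℝ) 1) * ((n : ℝ) + 1)⁻¹ := by
          refine Finset.sum_le_sum fun i _ => (moment_sub_le ν _ _).trans ?_
          refine mul_le_mul_of_nonneg_left (inv_anti₀ (by positivity) ?_) (by positivity)
          push_cast
          linarith [i.cast_nonneg (α := ℝ)]
      _ = _ := by rw [Finset.sum_const, Finset.card_range, nsmul_eq_mul]; ring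
  have hsum : Summable fun n : ℕ => ((n : ℝ) + θ) ^ β * b n ^ 2 := by
    have h1 : Summable fun n : ℕ => ((n : ℝ) + 1) ^ (β - 2) := by
      have := (summable_nat_add_iff 1).2 (Real.summable_nat_rpow.2 (by linarith : β - 2 < -1))
      simpa using this
    set K' : ℝ := 1 + θ + θ⁻¹ with hK'
    have hti : 0 < θ⁻¹ := by positivity
    refine Summable.of_nonneg_of_le (fun n => by positivity) (fun n => ?_)
      (h1.mul_left (K' ^ |β| * (M * (M * ν.real (Set.Ico (0 : ℝ) 1))) ^ 2))
    have hn : (0 : ℝ) < (n : ℝ) + 1 := by positivity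
    have w : ((n : ℝ) + θ) ^ β ≤ K' ^ |β| * ((n : ℝ) + 1) ^ β := by
      refine rpow_le_of_comparable (by linarith) hn ?_ ?_
      · have e : K' * ((n : ℝ) + θ) = (1 + θ + θ⁻¹) * n + (θ + θ * θ + 1) := by
          rw [hK']; field_simp
        rw [e]
        have : (0 : ℝ) ≤ (θ + θ⁻¹) * n := by positivity
        nlinarith
      · have : (0 : ℝ) ≤ (θ + θ⁻¹) * n := by positivity
        nlinarith
    calc _ ≤ (K' ^ |β| * ((n : ℝ) + 1) ^ β) *
          (M * (M * ν.real (Set.Ico (0 : ℝ) 1)) * ((n : ℝ) + 1)⁻¹) ^ 2 :=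
          mul_le_mul w (pow_le_pow_left₀ (hb0 n) (hbup n) 2) (by positivity) (by positivity)
      _ = _ := by
          rw [Real.rpow_sub hn, Real.rpow_two]
          field_simp
  have hweight : ∀ (γ : ℝ) (k : ℕ), M ≤ k → k < M + M + M →
      ((k : ℝ) + θ) ^ γ ≤ K ^ |γ| * (M : ℝ) ^ γ ∧ (M : ℝ) ^ γ ≤ K ^ |γ| * ((k : ℝ) + θ) ^ γ := by
    intro γ k h1 h2
    have h1' : (M : ℝ) ≤ k := by exact_mod_cast h1
    have h2' : (k : ℝ) ≤ M + M + M := by exact_mod_cast h2.le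
    have i1 : (M : ℝ) ≤ K * ((k : ℝ) + θ) := by nlinarith
    have i2 : (k : ℝ) + θ ≤ K * M := by nlinarith
    exact ⟨rpow_le_of_comparable hK1 hM0 i1 i2,
      rpow_le_of_comparable hK1 (by positivity) i2 i1⟩
  have hrhs : ∑ k ∈ Finset.range (M + M + M), ((k : ℝ) + θ) ^ α * c k ^ 2
      ≤ 2 * K ^ |α| * (M * (M : ℝ) ^ α) := by
    rw [Finset.range_eq_Ico, ← Finset.sum_Ico_consecutive _ (Nat.zero_le M) (by omega)]
    have z1 : ∑ k ∈ Finset.Ico 0 M, ((k : ℝ) + θ) ^ α * c k ^ 2 = 0 :=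
      Finset.sum_eq_zero fun k hk => by
        have := (Finset.mem_Ico.1 hk).2
        simp only [hc]; rw [if_pos this]; ring
    rw [z1, zero_add]
    calc _ ≤ ∑ k ∈ Finset.Ico M (M + M + M), K ^ |α| * (M : ℝ) ^ α := by
          refine Finset.sum_le_sum fun k hk => ?_
          have hk := Finset.mem_Ico.1 hk
          have hck : c k ^ 2 ≤ 1 := by
            simp only [hc]; split_ifs <;> norm_num
          calc _ ≤ ((k : ℝ) + θ) ^ α * 1 := mul_le_mul_of_nonneg_left hck (by positivity)
            _ ≤ _ := by rw [mul_one]; exact (hweight α k hk.1 hk.2).1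
      _ = _ := by
          rw [Finset.sum_const, Nat.card_Ico, nsmul_eq_mul,
            show M + M + M - M = 2 * M by omega]
          push_cast; ring
  have hlow : (M : ℝ) * ((K ^ |β|)⁻¹ * (M : ℝ) ^ β * (M * (κ * V)) ^ 2)
      ≤ ∑' n : ℕ, ((n : ℝ) + θ) ^ β * b n ^ 2 := by
    refine le_trans ?_ (hsum.sum_le_tsum (Finset.Ico M (M + M)) fun n _ => by positivity)
    have : ∑ n ∈ Finset.Ico M (M + M), ((K ^ |β|)⁻¹ * (M : ℝ) ^ β * (M * (κ * V)) ^ 2)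
        = (M : ℝ) * ((K ^ |β|)⁻¹ * (M : ℝ) ^ β * (M * (κ * V)) ^ 2) := by
      rw [Finset.sum_const, Nat.card_Ico, nsmul_eq_mul, Nat.add_sub_cancel]
    rw [← this]
    refine Finset.sum_le_sum fun n hn => ?_
    have hn := Finset.mem_Ico.1 hn
    refine mul_le_mul ?_ (pow_le_pow_left₀ (by positivity) ?_ 2) (by positivity) (by positivity)
    · rw [inv_mul_le_iff₀ (by positivity)]
      exact (hweight β n hn.1 (by omega)).2
    · calc (M : ℝ) * (κ * V) = ∑ i ∈ Finset.range M, κ * V := by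
            rw [Finset.sum_const, Finset.card_range, nsmul_eq_mul]
        _ ≤ b n := Finset.sum_le_sum fun i hi =>
            le_moment_sub ν _ M hM (by have := Finset.mem_range.1 hi; omega)
  have hfin : (M : ℝ) * ((K ^ |β|)⁻¹ * (M : ℝ) ^ β * (M * (κ * V)) ^ 2)
      ≤ C * (2 * K ^ |α| * (M * (M : ℝ) ^ α)) :=
    hlow.trans (hb.trans (mul_le_mul_of_nonneg_left hrhs hC.le))
  have hexp : ((M : ℝ) ^ (-(1 + (β - α) / 2))) ^ 2 = (M : ℝ) ^ α / ((M : ℝ) ^ β * (M : ℝ) ^ 2) := by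
    rw [← Real.rpow_natCast ((M : ℝ) ^ _) 2, ← Real.rpow_mul hM0.le, ← Real.rpow_natCast (M : ℝ) 2,
      ← Real.rpow_add hM0, ← Real.rpow_sub hM0]
    congr 1; push_cast; ring
  refine abs_le_of_sq_le_sq' ?_ (by positivity) |>.2
  rw [mul_pow, Real.sq_sqrt (by positivity), hexp]
  have hKβ : 0 < K ^ |β| := by positivity
  have hMβ : 0 < (M : ℝ) ^ β := by positivity
  have hMα : 0 < (M : ℝ) ^ α := by positivity
  rw [div_mul_div_comm, le_div_iff₀ (by positivity)]
  have h2 := mul_le_mul_of_nonneg_left hfin (by positivity : 0 ≤ K ^ |β| * (M : ℝ)⁻¹)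
  have e1 : K ^ |β| * (M : ℝ)⁻¹ * (M * ((K ^ |β|)⁻¹ * (M : ℝ) ^ β * (M * (κ * V)) ^ 2))
      = V ^ 2 * (κ ^ 2 * ((M : ℝ) ^ β * (M : ℝ) ^ 2)) := by field_simp
  have e2 : K ^ |β| * (M : ℝ)⁻¹ * (C * (2 * K ^ |α| * (M * (M : ℝ) ^ α)))
      = C * (2 * K ^ |α|) * K ^ |β| * (M : ℝ) ^ α := by field_simp
  rw [e1, e2] at h2
  exact h2

/-- Block estimates sum up geometrically to the Carleson condition. -/
theorem carleson_of_block {s E : ℝ} (hs : 0 < s) (hE : 0 < E) (ν : Measure ℝ) [IsFiniteMeasure ν]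
    (h : ∀ M : ℕ, 2 ≤ M → ν.real (Set.Ico (1 - 1 / (M : ℝ)) (1 - 1 / (2 * M)))
        ≤ E * (M : ℝ) ^ (-s)) :
    ∃ C₁ : ℝ, 0 < C₁ ∧ ∀ t ∈ Set.Ico (0 : ℝ) 1,
      ν (Set.Ico t 1) ≤ ENNReal.ofReal (C₁ * (1 - t) ^ s) := by
  set q : ℝ := (2 : ℝ) ^ (-s) with hq
  have hq0 : 0 < q := by positivity
  have hq1 : q < 1 := Real.rpow_lt_one_of_one_lt_of_neg (by norm_num) (by linarith)
  have hq1' : 0 < 1 - q := by linarith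
  refine ⟨2 ^ s * ν.real Set.univ + E * (1 - q)⁻¹ * 2 ^ s, by positivity, fun t ht => ?_⟩
  have ht1 : 0 < 1 - t := by linarith [ht.2]
  have h2s : (1 - t) ^ s * 2 ^ s = (2 * (1 - t)) ^ s := by
    rw [Real.mul_rpow (by norm_num) ht1.le]; ring
  rcases lt_or_ge t (1 / 2) with htl | htl
  · have h1 : 1 ≤ (2 * (1 - t)) ^ s := Real.one_le_rpow (by linarith) hs.le
    calc ν (Set.Ico t 1) ≤ ν Set.univ := measure_mono (Set.subset_univ _)
      _ = ENNReal.ofReal (ν.real Set.univ) := (ofReal_measureReal).symm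
      _ ≤ _ := by
          refine ENNReal.ofReal_le_ofReal ?_
          have e : (2 ^ s * ν.real Set.univ + E * (1 - q)⁻¹ * 2 ^ s) * (1 - t) ^ s
            = (ν.real Set.univ + E * (1 - q)⁻¹) * (2 * (1 - t)) ^ s := by rw [← h2s]; ring
          rw [e]
          have h0 : 0 ≤ ν.real Set.univ := measureReal_nonneg
          have h3 : 0 ≤ E * (1 - q)⁻¹ := by positivity
          nlinarith
  · set M := ⌊(1 - t)⁻¹⌋₊ with hMdef
    have hM : 2 ≤ M := by
      refine Nat.le_floor ?_
      rw [le_inv_comm₀ (by norm_num) ht1]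
      push_cast; linarith
    have hM' : (2 : ℝ) ≤ M := by exact_mod_cast hM
    have hM0 : (0 : ℝ) < M := by linarith
    have hMle : (M : ℝ) ≤ (1 - t)⁻¹ := Nat.floor_le (by positivity)
    have hMlt : (1 - t)⁻¹ < M + 1 := Nat.lt_floor_add_one _
    have hMt : M * (1 - t) ≤ 1 := by
      have := mul_le_mul_of_nonneg_right hMle ht1.le
      rwa [inv_mul_cancel₀ ht1.ne'] at this
    have hMs : (M : ℝ) ^ (-s) ≤ (2 * (1 - t)) ^ s := by
      rw [Real.rpow_neg hM0.le, ← Real.inv_rpow hM0.le]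
      refine Real.rpow_le_rpow (by positivity) ?_ hs.le
      rw [inv_le_iff_one_le_mul₀ hM0]
      have := mul_lt_mul_of_pos_right hMlt ht1
      rw [inv_mul_cancel₀ ht1.ne'] at this
      nlinarith
    have hcover : Set.Ico t 1 ⊆ ⋃ i : ℕ,
        Set.Ico (1 - 1 / ((M * 2 ^ i : ℕ) : ℝ)) (1 - 1 / (2 * ((M * 2 ^ i : ℕ) : ℝ))) := by
      intro u hu
      have hu1 : 0 < 1 - u := by linarith [hu.2]
      have hMu : 0 < M * (1 - u) := by positivity
      have hx : 1 ≤ (M * (1 - u))⁻¹ := by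
        rw [one_le_inv₀ hMu]
        exact le_trans (mul_le_mul_of_nonneg_left (by linarith [hu.1]) hM0.le) hMt
      obtain ⟨i, hi1, hi2⟩ := exists_nat_pow_near hx (one_lt_two (α := ℝ))
      refine Set.mem_iUnion.2 ⟨i, ?_, ?_⟩
      · push_cast
        rw [sub_le_comm, le_div_iff₀ (by positivity)]
        have := mul_le_mul_of_nonneg_right hi1 hMu.le
        rw [inv_mul_cancel₀ hMu.ne'] at this
        linarith
      · push_cast
        rw [lt_sub_comm, div_lt_iff₀ (by positivity)]
        have := mul_lt_mul_of_pos_right hi2 hMu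
        rw [inv_mul_cancel₀ hMu.ne', pow_succ] at this
        linarith
    have hterm : ∀ i : ℕ,
        ν (Set.Ico (1 - 1 / ((M * 2 ^ i : ℕ) : ℝ)) (1 - 1 / (2 * ((M * 2 ^ i : ℕ) : ℝ))))
          ≤ ENNReal.ofReal (E * (M : ℝ) ^ (-s) * q ^ i) := by
      intro i
      rw [← ofReal_measureReal]
      refine ENNReal.ofReal_le_ofReal ((h (M * 2 ^ i)
        (hM.trans (Nat.le_mul_of_pos_right _ (by positivity)))).trans (le_of_eq ?_))
      push_cast
      rw [Real.mul_rpow hM0.le (by positivity), ← Real.rpow_natCast, ← Real.rpow_natCast q,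
        hq, ← Real.rpow_mul (by norm_num), ← Real.rpow_mul (by norm_num), mul_comm (i : ℝ),
        mul_assoc]
    calc ν (Set.Ico t 1) ≤ _ := measure_mono hcover
      _ ≤ _ := measure_iUnion_le _
      _ ≤ ∑' i : ℕ, ENNReal.ofReal (E * (M : ℝ) ^ (-s) * q ^ i) := ENNReal.tsum_le_tsum hterm
      _ = ENNReal.ofReal (E * (M : ℝ) ^ (-s) * (1 - q)⁻¹) := by
          rw [← ENNReal.ofReal_tsum_of_nonneg (fun i => by positivity)
            ((summable_geometric_of_lt_one hq0.le hq1).mul_left _), tsum_mul_left,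
            tsum_geometric_of_lt_one hq0.le hq1]
      _ ≤ _ := by
          refine ENNReal.ofReal_le_ofReal ?_
          have h3 : E * (M : ℝ) ^ (-s) * (1 - q)⁻¹ ≤ E * (2 * (1 - t)) ^ s * (1 - q)⁻¹ := by
            gcongr
          rw [← h2s] at h3
          have h4 : 0 ≤ 2 ^ s * ν.real Set.univ * (1 - t) ^ s :=
            mul_nonneg (mul_nonneg (by positivity) measureReal_nonneg) (by positivity)
          linarith

theorem moment_withDensity_eq (lam : ℝ) (μ : Measure ℝ) (m : ℕ) :
    ∫ t in Set.Ico (0 : ℝ) 1, t ^ m * (1 - t) ^ (lam - 1) ∂μ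
      = ∫ t in Set.Ico (0 : ℝ) 1, t ^ m
          ∂(μ.withDensity fun t => ENNReal.ofReal ((1 - t) ^ (lam - 1))) := by
  rw [setIntegral_withDensity_eq_setIntegral_toReal_smul (by fun_prop)
    (Filter.Eventually.of_forall fun _ => ENNReal.ofReal_lt_top) _ measurableSet_Ico]
  refine setIntegral_congr_fun measurableSet_Ico fun t ht => ?_
  have : 0 ≤ (1 - t) ^ (lam - 1) := Real.rpow_nonneg (by linarith [ht.2]) _
  simp only [smul_eq_mul]
  rw [ENNReal.toReal_ofReal this, mul_comm]

/-! ### The characterization -/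

/-- **Proposition 6.2 (1).** For `λ > 0`, `θ > 0`, `−1 < α < 1`, `−1 < β < 1`
and a positive Borel measure `μ` on `[0,1)` such that `dν(t) = (1−t)^{λ−1} dμ(t)` is a
finite measure, the Hilbert-type operator `H_λ^μ` with moments
`μ_λ[m] = ∫_{[0,1)} t^m (1−t)^{λ−1} dμ(t)` is bounded from `F²_{θ,α}` to `F²_{θ,β}`
if and only if `ν` is a `[1 + (β−α)/2]`-Carleson measure on `[0,1)`. -/
theorem hilbert_type_lambda_measure_operator_bounded_iff_carleson
    (lam θ α β : ℝ) (hlam : 0 < lam) (hθ : 0 < θ)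
    (hα₁ : -1 < α) (hα₂ : α < 1) (hβ₁ : -1 < β) (hβ₂ : β < 1)
    (μ : Measure ℝ) (hsupp : μ (Set.Ico (0 : ℝ) 1)ᶜ = 0)
    [IsFiniteMeasure (μ.withDensity fun t => ENNReal.ofReal ((1 - t) ^ (lam - 1)))] :
    (∃ C : ℝ, 0 < C ∧ ∀ a : ℕ → ℂ,
      Summable (fun k : ℕ => ((k : ℝ) + θ) ^ α * ‖a k‖ ^ 2 * (Nat.factorial k : ℝ)) →
      ∑' n : ℕ, ((n : ℝ) + θ) ^ β *
          ‖∑' k : ℕ, (((∫ t in Set.Ico (0 : ℝ) 1, t ^ (k + n) * (1 - t) ^ (lam - 1) ∂μ) *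
              Real.sqrt (Nat.factorial k) : ℝ) : ℂ) * a k‖ ^ 2
        ≤ C * ∑' k : ℕ, ((k : ℝ) + θ) ^ α * ‖a k‖ ^ 2 * (Nat.factorial k : ℝ)) ↔
    (∃ C₁ : ℝ, 0 < C₁ ∧ ∀ t ∈ Set.Ico (0 : ℝ) 1,
      (μ.withDensity fun t => ENNReal.ofReal ((1 - t) ^ (lam - 1))) (Set.Ico t 1)
        ≤ ENNReal.ofReal (C₁ * (1 - t) ^ (1 + (β - α) / 2))) := by
  simp only [moment_withDensity_eq]
  set ν := μ.withDensity fun t => ENNReal.ofReal ((1 - t) ^ (lam - 1)) with hν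
  have hs : 0 < 1 + (β - α) / 2 := by linarith
  constructor
  · rintro ⟨C, hC, H⟩
    obtain ⟨E, hE, hblock⟩ := block_measure_le hθ hβ₂ hC ν H
    exact carleson_of_block hs hE ν hblock
  · rintro ⟨C₁, hC₁, hcar⟩
    obtain ⟨D, hD⟩ := moment_le_of_carleson hs (by linarith) ν hC₁ hcar
    have hm0 : ∀ k : ℕ, 0 ≤ ∫ t in Set.Ico (0 : ℝ) 1, t ^ k ∂ν := fun k =>
      setIntegral_nonneg measurableSet_Ico fun t ht => pow_nonneg ht.1 k
    obtain ⟨C, hC, h⟩ := hilbert_inequality hθ hα₁ hα₂ hβ₁ hβ₂ _ hm0 D hD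
    refine ⟨C, hC, fun a ha => ?_⟩
    have e : ∀ k : ℕ, ((k : ℝ) + θ) ^ α * ‖a k‖ ^ 2 * (Nat.factorial k : ℝ)
        = ((k : ℝ) + θ) ^ α * (Real.sqrt (Nat.factorial k) * ‖a k‖) ^ 2 := fun k => by
      rw [mul_pow, Real.sq_sqrt (by positivity)]; ring
    simp only [e] at ha ⊢
    obtain ⟨hsm, hle⟩ := h (fun k => Real.sqrt (Nat.factorial k) * ‖a k‖)
      (fun k => by positivity) ha
    refine Real.tsum_le_of_sum_range_le (fun n => by positivity) fun N => ?_
    refine le_trans (Finset.sum_le_sum fun n _ => ?_) (hle N)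
    have en : ∀ k : ℕ, ‖(((∫ t in Set.Ico (0 : ℝ) 1, t ^ (k + n) ∂ν) *
        Real.sqrt (Nat.factorial k) : ℝ) : ℂ) * a k‖
        = (∫ t in Set.Ico (0 : ℝ) 1, t ^ (k + n) ∂ν) *
          (Real.sqrt (Nat.factorial k) * ‖a k‖) := fun k => by
      rw [norm_mul, Complex.norm_real,
        Real.norm_of_nonneg (mul_nonneg (hm0 _) (Real.sqrt_nonneg _)), mul_assoc]
    refine mul_le_mul_of_nonneg_left (pow_le_pow_left₀ (norm_nonneg _) ?_ 2) (by positivity)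
    refine (norm_tsum_le_tsum_norm ?_).trans (le_of_eq ?_)
    · simp only [en]; exact hsm n
    · simp only [en]
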